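/- Let λ be the partition associated to a gap sequence G of genus g, and let 0 ≤ k ≤ g (with the conventions that the empty derivative is the identity when k = g, and s_∅ = 1 when k = 0). Then ∂_{a^{(k)}_1}⋯∂_{a^{(k)}_{m_k}} s_λ(t), evaluated at t = [x_1]+⋯+[x_k], equals c_k · s_{(λ_1,...,λ_k)}([x_1]+⋯+[x_k]), where c_k ∈ {±1} is the sign of the permutation of (g−k−1, ..., 1, 0) given by the tuple (w_1^*, ..., w_{m_k}^*, w_{g−k−m_k}, w_{g−k−m_k−1}, ..., w_1), and c_g = 1. -/

import Mathlib

open MvPolynomial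

/-- The polynomial `p_n(t)` defined by `exp(Σ_{n≥1} t_n k^n) = Σ_{n≥0} p_n(t) k^n`,
as a polynomial in the variables `t_1, t_2, ...` (variable `X n` stands for `t_n`). -/
noncomputable def pS (n : ℕ) : MvPolynomial ℕ ℚ :=
  ∑ m ∈ Finset.range (n + 1), (Nat.factorial m : ℚ)⁻¹ •
    ∑ c ∈ Finset.univ.filter
        (fun c : Fin m → Fin (n + 1) =>
          (∑ j, ((c j : ℕ))) = n ∧ ∀ j, 1 ≤ (c j : ℕ)),
      ∏ j, X ((c j : ℕ))

/-- `p_n` for `n : ℤ`, with `p_n = 0` for `n < 0`. -/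
noncomputable def pz (n : ℤ) : MvPolynomial ℕ ℚ :=
  if 0 ≤ n then pS n.toNat else 0

/-- The Schur function `s_λ(t) = det(p_{λ_i - i + j})_{1 ≤ i,j ≤ l}` (here `0`-indexed). -/
noncomputable def schur {l : ℕ} (lam : Fin l → ℕ) : MvPolynomial ℕ ℚ :=
  Matrix.det (Matrix.of fun a b : Fin l =>
    pz ((lam a : ℤ) - ((a : ℕ) : ℤ) + ((b : ℕ) : ℤ)))

/-- Substitution `t_n ↦ (x_1^n + ⋯ + x_k^n)/n`, i.e. `t = [x_1] + ⋯ + [x_k]`. -/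
noncomputable def toPowerSums (k : ℕ) (f : MvPolynomial ℕ ℚ) : MvPolynomial (Fin k) ℚ :=
  aeval (fun n : ℕ => (n : ℚ)⁻¹ • ∑ i : Fin k, X i ^ n) f

/-- Iterated partial derivative `∂_{i_1} ⋯ ∂_{i_r}` for a list `L = [i_1, ..., i_r]`. -/
noncomputable def derivs (L : List ℕ) (f : MvPolynomial ℕ ℚ) : MvPolynomial ℕ ℚ :=
  L.foldr (fun i g => pderiv i g) f

/-- The entries of a partition `λ` padded by zeros (`0`-indexed). -/
def pad {l : ℕ} (lam : Fin l → ℕ) (a : ℕ) : ℕ := if h : a < l then lam ⟨a, h⟩ else 0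

/-- `w_i`: the `(i+1)`-st smallest element of `G` (0-indexed: `wseq G 0 = w_1`). -/
def wseq (G : Finset ℕ) (i : ℕ) : ℕ := (G.sort (· ≤ ·)).getD i 0

/-- `w_i^*`: the `(i+1)`-st smallest element of the complement of `G`
(0-indexed: `wstar G 0 = w_1^* = 0`). -/
noncomputable def wstar (G : Finset ℕ) (i : ℕ) : ℕ := Nat.nth (fun n => n ∉ G) i

/-- `m_k = #{i : w_i^* < g - k}`, the number of non-gaps below `g - k`. -/
def gapm (G : Finset ℕ) (g k : ℕ) : ℕ :=
  ((Finset.range (g - k)).filter (fun n => n ∉ G)).card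

/-- `a^{(k)}_{j+1} = w_{g-k-j} - w_{j+1}^*` (0-indexed in `j`, `0 ≤ j < m_k`). -/
noncomputable def gapa (G : Finset ℕ) (g k j : ℕ) : ℕ :=
  wseq G (g - k - j - 1) - wstar G j

/-- The partition associated to the gap sequence `G`:
`λ = (w_g, ..., w_1) - (g-1, ..., 1, 0)`, i.e. `λ_{a+1} = w_{g-a} - (g-1-a)` (0-indexed `a`). -/
def gapPart (G : Finset ℕ) (g a : ℕ) : ℕ := wseq G (g - 1 - a) - (g - 1 - a)

/-!
Put `β_a = λ_a + g - 1 - a`, so that `s_λ = det(p_{β_a - b})` with `b` running through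
`g - 1, ..., 1, 0`; here the `β_a` are the elements of `G` in decreasing order. Since
`∂_i p_n = p_{n-i}`, the derivative of `s_λ` is a sum of determinants of the same shape in which the
`β_a` have been lowered by the `a^{(k)}_j` in all possible ways.

At `t = [x_1] + ⋯ + [x_k]` the `p_n` are the coefficients of `∏ (1 - x_i z)⁻¹`, hence satisfy a
recursion of length `k + 1`, and this makes the determinant vanish unless every `r < g - k` is one
of the lowered `β_a`. The `β_a` omit the non-gaps, so each `w_j^*` with `j ≤ m_k` must arise from a
row that is actually lowered. Comparing the lowered rows from the bottom up, this is possible in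
only one way: `w_{g-k-j+1}` is lowered to `w_j^*` for every `j`. The surviving determinant is block
triangular; the first block is `s_{(λ_1, ..., λ_k)}`, and the second one is a row permutation of a
unitriangular matrix, with determinant `c_k`.
-/

section ExpSubst

theorem coeff_pow_eq_sum_fin {A : Type*} [CommSemiring A] (f : PowerSeries A) (m n : ℕ) :
    PowerSeries.coeff n (f ^ m) =
      ∑ c : Fin m → Fin (n + 1) with ∑ j, (c j : ℕ) = n, ∏ j, PowerSeries.coeff (c j) f := by
  have htrunc : PowerSeries.trunc (n + 1) f =
      ∑ i : Fin (n + 1), Polynomial.monomial (i : ℕ) (PowerSeries.coeff i f) := by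
    ext d
    rw [Fin.sum_univ_eq_sum_range fun i => Polynomial.monomial i (PowerSeries.coeff i f)]
    simp [PowerSeries.coeff_trunc, Polynomial.finsetSum_coeff, Polynomial.coeff_monomial]
  have hprod (c : Fin m → Fin (n + 1)) :
      ∏ j, Polynomial.monomial (c j : ℕ) (PowerSeries.coeff (c j) f) =
        Polynomial.monomial (∑ j, (c j : ℕ)) (∏ j, PowerSeries.coeff (c j) f) := by
    simp only [← Polynomial.C_mul_X_pow_eq_monomial, Finset.prod_mul_distrib, map_prod,
      Finset.prod_pow_eq_pow_sum]
  calc PowerSeries.coeff n (f ^ m)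
      = (PowerSeries.trunc (n + 1) f ^ m).coeff n := by
        have h := congrArg (Polynomial.coeff · n) (PowerSeries.trunc_trunc_pow f (n + 1) m)
        simpa [PowerSeries.coeff_trunc, ← Polynomial.coe_pow] using h.symm
    _ = _ := by
        simp only [htrunc, Finset.sum_pow', Fintype.piFinset_univ, Polynomial.finsetSum_coeff,
          hprod, Polynomial.coeff_monomial, Finset.sum_filter]

variable {A : Type*} [CommRing A] [Algebra ℚ A] {T : PowerSeries A}

theorem coeff_exp_subst (hT : PowerSeries.constantCoeff T = 0) {n N : ℕ} (hN : n < N) :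
    PowerSeries.coeff n ((PowerSeries.exp A).subst T) =
      ∑ m ∈ Finset.range N, (m.factorial : ℚ)⁻¹ • PowerSeries.coeff n (T ^ m) := by
  have hzero (m : ℕ) (hm : n < m) : PowerSeries.coeff n (T ^ m) = 0 :=
    PowerSeries.X_pow_dvd_iff.mp (pow_dvd_pow_of_dvd (PowerSeries.X_dvd_iff.mpr hT) m) n hm
  rw [PowerSeries.coeff_subst' (PowerSeries.HasSubst.of_constantCoeff_zero' hT),
    finsum_eq_sum_of_support_subset (s := Finset.range N)]
  · simp [Algebra.smul_def]
  · intro m hm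
    by_contra hmN
    simp only [Finset.coe_range, Set.mem_Iio, not_lt] at hmN
    exact hm (by simp [hzero m (hN.trans_le hmN)])

theorem constantCoeff_exp_subst (hT : PowerSeries.constantCoeff T = 0) :
    PowerSeries.constantCoeff ((PowerSeries.exp A).subst T) = 1 := by
  rw [← PowerSeries.coeff_zero_eq_constantCoeff_apply, coeff_exp_subst hT zero_lt_one]
  simp

theorem derivative_exp_subst (hT : PowerSeries.constantCoeff T = 0) :
    PowerSeries.derivative A ((PowerSeries.exp A).subst T) =
      (PowerSeries.exp A).subst T * PowerSeries.derivative A T := by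
  rw [PowerSeries.derivative_subst (PowerSeries.HasSubst.of_constantCoeff_zero' hT),
    PowerSeries.derivative_exp]

/-- The extension of a derivation of `A` to power series over `A`, acting on coefficients and
killing the variable. -/
noncomputable def coeffDerivation {R A : Type*} [CommRing R] [CommRing A] [Algebra R A]
    (D : Derivation R A A) : Derivation R (PowerSeries A) (PowerSeries A) :=
  Derivation.mk'
    { toFun f := PowerSeries.mk fun n => D (PowerSeries.coeff n f)
      map_add' f g := by ext; simp
      map_smul' q f := by ext; simp }
    fun f g => by
      ext n
      simp only [LinearMap.coe_mk, AddHom.coe_mk, PowerSeries.coeff_mk, PowerSeries.coeff_mul,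
        map_sum, Derivation.leibniz, map_add, smul_eq_mul, Finset.sum_add_distrib]
      rw [add_right_inj, ← Finset.Nat.sum_antidiagonal_swap]
      rfl

theorem coeff_coeffDerivation {R A : Type*} [CommRing R] [CommRing A] [Algebra R A]
    (D : Derivation R A A) (f : PowerSeries A) (n : ℕ) :
    PowerSeries.coeff n (coeffDerivation D f) = D (PowerSeries.coeff n f) :=
  PowerSeries.coeff_mk n fun n => D (PowerSeries.coeff n f)

theorem coeffDerivation_exp_subst (D : Derivation ℚ A A)
    (hT : PowerSeries.constantCoeff T = 0) :
    coeffDerivation D ((PowerSeries.exp A).subst T) =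
      (PowerSeries.exp A).subst T * coeffDerivation D T := by
  ext n
  have hterm (m : ℕ) : D (((m + 1).factorial : ℚ)⁻¹ • PowerSeries.coeff n (T ^ (m + 1))) =
      (m.factorial : ℚ)⁻¹ • PowerSeries.coeff n (T ^ m * coeffDerivation D T) := by
    rw [D.map_smul, ← coeff_coeffDerivation, Derivation.leibniz_pow, add_tsub_cancel_right,
      map_nsmul, ← Nat.cast_smul_eq_nsmul ℚ, smul_eq_mul, smul_smul, Nat.factorial_succ]
    congr 1
    push_cast
    field_simp
  have hcoeff : ∀ p ∈ Finset.HasAntidiagonal.antidiagonal n,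
      PowerSeries.coeff p.1 ((PowerSeries.exp A).subst T) =
        ∑ m ∈ Finset.range (n + 1), (m.factorial : ℚ)⁻¹ • PowerSeries.coeff p.1 (T ^ m) :=
    fun p hp => coeff_exp_subst hT
      (Nat.lt_succ_of_le (Finset.HasAntidiagonal.antidiagonal.fst_le hp))
  calc PowerSeries.coeff n (coeffDerivation D ((PowerSeries.exp A).subst T))
      = ∑ m ∈ Finset.range (n + 1),
          (m.factorial : ℚ)⁻¹ • PowerSeries.coeff n (T ^ m * coeffDerivation D T) := by
        rw [coeff_coeffDerivation, coeff_exp_subst hT (show n < n + 1 + 1 by omega), map_sum,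
          Finset.sum_range_succ', Finset.sum_congr rfl fun m _ => hterm m]
        simp [PowerSeries.coeff_one, apply_ite D]
    _ = PowerSeries.coeff n ((PowerSeries.exp A).subst T * coeffDerivation D T) := by
        simp only [PowerSeries.coeff_mul, Finset.smul_sum, ← smul_mul_assoc]
        rw [Finset.sum_comm]
        refine Finset.sum_congr rfl fun p hp => ?_
        rw [← Finset.sum_mul, hcoeff p hp]

end ExpSubst

/-- The power series `Σ_{n≥1} t_n k^n` in `k`, with exponential `Σ_{n≥0} p_n(t) k^n`. -/
noncomputable def timeSeries : PowerSeries (MvPolynomial ℕ ℚ) :=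
  PowerSeries.mk fun n => if n = 0 then 0 else X n

theorem coeff_timeSeries (n : ℕ) :
    PowerSeries.coeff n timeSeries = if n = 0 then 0 else X n :=
  PowerSeries.coeff_mk n _

theorem constantCoeff_timeSeries : PowerSeries.constantCoeff timeSeries = 0 := by
  simp [timeSeries]

theorem coeff_timeSeries_pow (m n : ℕ) :
    PowerSeries.coeff n (timeSeries ^ m) =
      ∑ c : Fin m → Fin (n + 1) with (∑ j, (c j : ℕ)) = n ∧ ∀ j, 1 ≤ (c j : ℕ),
        ∏ j, X (c j : ℕ) := by
  rw [coeff_pow_eq_sum_fin, ← Finset.filter_filter]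
  refine (Finset.sum_congr rfl fun c _ => ?_).trans (Finset.sum_filter _ _).symm
  simp only [coeff_timeSeries]
  split_ifs with hc
  · exact Finset.prod_congr rfl fun j _ => if_neg (Nat.one_le_iff_ne_zero.mp (hc j))
  · push Not at hc
    obtain ⟨j, hj⟩ := hc
    exact Finset.prod_eq_zero (Finset.mem_univ j) (if_pos (Nat.lt_one_iff.mp hj))

theorem coeff_exp_subst_timeSeries (n : ℕ) :
    PowerSeries.coeff n ((PowerSeries.exp (MvPolynomial ℕ ℚ)).subst timeSeries) = pS n := by
  simp only [coeff_exp_subst constantCoeff_timeSeries (Nat.lt_succ_self n), coeff_timeSeries_pow,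
    pS, Nat.succ_eq_add_one]

theorem pS_zero : pS 0 = 1 := by
  rw [← coeff_exp_subst_timeSeries, PowerSeries.coeff_zero_eq_constantCoeff_apply,
    constantCoeff_exp_subst constantCoeff_timeSeries]

theorem coeffDerivation_timeSeries {i : ℕ} (hi : i ≠ 0) :
    coeffDerivation (pderiv i) timeSeries = PowerSeries.X ^ i := by
  ext n
  rw [coeff_coeffDerivation, coeff_timeSeries, PowerSeries.coeff_X_pow]
  obtain rfl | hn := eq_or_ne n 0
  · simp [hi.symm]
  · simp [hn, pderiv_X, Pi.single_apply]

theorem pderiv_pS {i : ℕ} (hi : i ≠ 0) (n : ℕ) :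
    pderiv i (pS n) = if i ≤ n then pS (n - i) else 0 := by
  rw [← coeff_exp_subst_timeSeries, ← coeff_coeffDerivation,
    coeffDerivation_exp_subst _ constantCoeff_timeSeries, coeffDerivation_timeSeries hi,
    PowerSeries.coeff_mul_X_pow', coeff_exp_subst_timeSeries]

theorem pz_natCast (n : ℕ) : pz n = pS n := by
  simp [pz]

theorem pz_of_neg {n : ℤ} (hn : n < 0) : pz n = 0 :=
  if_neg hn.not_ge

theorem pz_zero : pz 0 = 1 := by
  rw [← pS_zero, ← pz_natCast, Nat.cast_zero]

theorem pderiv_pz {i : ℕ} (hi : i ≠ 0) (n : ℤ) : pderiv i (pz n) = pz (n - i) := by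
  obtain hn | hn := lt_or_ge n 0
  · rw [pz_of_neg hn, pz_of_neg (by omega), map_zero]
  lift n to ℕ using hn
  rw [pz_natCast, pderiv_pS hi]
  split_ifs with h
  · rw [← Nat.cast_sub h, pz_natCast]
  · rw [pz_of_neg (by omega)]

theorem derivation_prod {R A M ι : Type*} [CommSemiring R] [CommSemiring A] [AddCommMonoid M]
    [Algebra R A] [Module A M] [Module R M] [DecidableEq ι] (D : Derivation R A M)
    (s : Finset ι) (f : ι → A) :
    D (∏ i ∈ s, f i) = ∑ i ∈ s, (∏ j ∈ s.erase i, f j) • D (f i) := by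
  induction s using Finset.induction_on with
  | empty => simp
  | insert a s ha ih =>
    rw [Finset.prod_insert ha, Derivation.leibniz, ih, Finset.sum_insert ha,
      Finset.erase_insert ha, Finset.smul_sum, add_comm]
    refine congrArg _ (Finset.sum_congr rfl fun i hi => ?_)
    have hai : a ≠ i := (ne_of_mem_of_not_mem hi ha).symm
    rw [Finset.erase_insert_of_ne hai, Finset.prod_insert (mt Finset.mem_of_mem_erase ha),
      mul_smul]

section PowerSums

variable {R ι : Type*} [CommRing R] [Fintype ι]

/-- The polynomial `∏ (1 - x_i z)` in `z`, whose coefficients are the elementary symmetric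
polynomials in the `x_i` up to alternating signs. -/
noncomputable def signedEsymm (x : ι → R) : Polynomial R :=
  ∏ i, (1 - Polynomial.C (x i) * Polynomial.X)

theorem natDegree_signedEsymm_le (x : ι → R) :
    (signedEsymm x).natDegree ≤ Fintype.card ι := by
  refine (Polynomial.natDegree_prod_le _ _).trans ?_
  refine (Finset.sum_le_card_nsmul _ _ 1 fun i _ => ?_).trans (by simp)
  compute_degree

theorem coeff_zero_signedEsymm (x : ι → R) : (signedEsymm x).coeff 0 = 1 := by
  rw [Polynomial.coeff_zero_eq_eval_zero, signedEsymm, Polynomial.eval_prod]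
  simp

theorem one_sub_C_mul_X_mul_mk_pow (x : R) :
    (1 - PowerSeries.C x * PowerSeries.X) * PowerSeries.mk (fun n => x ^ (n + 1)) =
      PowerSeries.C x := by
  ext n
  rw [sub_mul, one_mul, mul_assoc, map_sub, PowerSeries.coeff_C_mul]
  cases n <;> simp [PowerSeries.coeff_succ_X_mul, pow_succ']

theorem derivative_signedEsymm (x : ι → R) :
    PowerSeries.derivative R (signedEsymm x : PowerSeries R) =
      -(signedEsymm x * PowerSeries.mk fun n => ∑ i, x i ^ (n + 1)) := by
  classical
  have hcoe : (signedEsymm x : PowerSeries R) =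
      ∏ i, (1 - PowerSeries.C (x i) * PowerSeries.X) := by
    rw [signedEsymm, ← Polynomial.coeToPowerSeries.ringHom_apply, map_prod]
    simp
  have hsum : PowerSeries.mk (fun n => ∑ i, x i ^ (n + 1)) =
      ∑ i, PowerSeries.mk fun n => x i ^ (n + 1) := by
    ext n
    simp [map_sum]
  have hfactor (i : ι) : PowerSeries.derivative R (1 - PowerSeries.C (x i) * PowerSeries.X) =
      -PowerSeries.C (x i) := by
    simp [Derivation.leibniz]
  rw [hcoe, hsum, derivation_prod, Finset.mul_sum, ← Finset.sum_neg_distrib]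
  refine Finset.sum_congr rfl fun i hi => ?_
  rw [hfactor, ← Finset.prod_erase_mul _ _ hi, mul_assoc, one_sub_C_mul_X_mul_mk_pow, smul_eq_mul,
    mul_neg]

end PowerSums

section PowerSumSeries

variable {R ι : Type*} [CommRing R] [Algebra ℚ R] [Fintype ι]

/-- The power series `Σ_{n≥1} (Σ_i x_i^n / n) z^n = -log ∏ (1 - x_i z)`, which is the series
`Σ_{n≥1} t_n z^n` at `t = Σ_i [x_i]`. Its constant term vanishes because `0⁻¹ = 0`. -/
noncomputable def powerSumSeries (x : ι → R) : PowerSeries R :=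
  PowerSeries.mk fun n => (n : ℚ)⁻¹ • ∑ i, x i ^ n

theorem constantCoeff_powerSumSeries (x : ι → R) :
    PowerSeries.constantCoeff (powerSumSeries x) = 0 := by
  simp [powerSumSeries]

theorem derivative_powerSumSeries (x : ι → R) :
    PowerSeries.derivative R (powerSumSeries x) =
      PowerSeries.mk fun n => ∑ i, x i ^ (n + 1) := by
  ext n
  have hn : ((n + 1 : ℕ) : ℚ) ≠ 0 := Nat.cast_ne_zero.mpr n.succ_ne_zero
  rw [PowerSeries.coeff_derivative, powerSumSeries, PowerSeries.coeff_mk, PowerSeries.coeff_mk,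
    mul_comm, ← Nat.cast_succ, ← nsmul_eq_mul, ← Nat.cast_smul_eq_nsmul ℚ, smul_smul,
    mul_inv_cancel₀ hn, one_smul]

theorem signedEsymm_mul_exp_subst_powerSumSeries (x : ι → R) :
    (signedEsymm x : PowerSeries R) * (PowerSeries.exp R).subst (powerSumSeries x) = 1 := by
  have : IsAddTorsionFree R := .of_module_rat R
  apply PowerSeries.derivative.ext
  · rw [Derivation.leibniz, derivative_exp_subst (constantCoeff_powerSumSeries x),
      derivative_signedEsymm, derivative_powerSumSeries, PowerSeries.derivative_one]
    simp only [smul_eq_mul]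
    ring
  · rw [map_mul, constantCoeff_exp_subst (constantCoeff_powerSumSeries x),
      Polynomial.constantCoeff_coe, coeff_zero_signedEsymm, mul_one, map_one]

end PowerSumSeries

theorem coeff_coe_mul_eq_sum_range {R : Type*} [CommSemiring R] {F : Polynomial R} {B : ℕ}
    (hF : F.natDegree < B) (H : PowerSeries R) (N : ℕ) :
    PowerSeries.coeff N ((F : PowerSeries R) * H) =
      ∑ c ∈ Finset.range B, F.coeff c * if c ≤ N then PowerSeries.coeff (N - c) H else 0 := by
  conv_lhs => rw [F.as_sum_range_C_mul_X_pow' hF]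
  rw [← Polynomial.coeToPowerSeries.ringHom_apply, map_sum, Finset.sum_mul, map_sum]
  refine Finset.sum_congr rfl fun c _ => ?_
  rw [Polynomial.coeToPowerSeries.ringHom_apply, Polynomial.coe_mul, Polynomial.coe_pow,
    Polynomial.coe_C, Polynomial.coe_X, mul_assoc, PowerSeries.coeff_C_mul,
    PowerSeries.coeff_X_pow_mul']

/-- The substitution `t = [x_1] + ⋯ + [x_k]` as an algebra homomorphism. -/
noncomputable def toPowerSumsHom (k : ℕ) : MvPolynomial ℕ ℚ →ₐ[ℚ] MvPolynomial (Fin k) ℚ :=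
  aeval fun n : ℕ => (n : ℚ)⁻¹ • ∑ i : Fin k, X i ^ n

theorem map_toPowerSumsHom_timeSeries (k : ℕ) :
    timeSeries.map (toPowerSumsHom k).toRingHom =
      powerSumSeries (X : Fin k → MvPolynomial (Fin k) ℚ) := by
  ext1 n
  rw [PowerSeries.coeff_map, coeff_timeSeries, powerSumSeries, PowerSeries.coeff_mk]
  obtain rfl | hn := eq_or_ne n 0
  · simp
  · simp [hn, toPowerSumsHom]

theorem toPowerSumsHom_pS (k n : ℕ) :
    toPowerSumsHom k (pS n) = PowerSeries.coeff n
      ((PowerSeries.exp (MvPolynomial (Fin k) ℚ)).subst (powerSumSeries X)) := by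
  have hmap := PowerSeries.map_subst (h := (toPowerSumsHom k).toRingHom)
    (PowerSeries.HasSubst.of_constantCoeff_zero' constantCoeff_timeSeries)
    (PowerSeries.exp (MvPolynomial ℕ ℚ))
  rw [PowerSeries.map_exp] at hmap
  rw [← coeff_exp_subst_timeSeries, ← map_toPowerSumsHom_timeSeries]
  exact congrArg (PowerSeries.coeff (R := MvPolynomial (Fin k) ℚ) n) hmap

theorem sum_signedEsymm_mul_toPowerSumsHom_pz {k B : ℕ} (hB : k < B) (N : ℤ) :
    ∑ c ∈ Finset.range B, (signedEsymm (X : Fin k → MvPolynomial (Fin k) ℚ)).coeff c *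
      toPowerSumsHom k (pz (N - c)) = if N = 0 then 1 else 0 := by
  obtain hN | hN := lt_or_ge N 0
  · rw [if_neg hN.ne]
    exact Finset.sum_eq_zero fun c _ => by rw [pz_of_neg (by omega), map_zero, mul_zero]
  lift N to ℕ using hN
  have hdeg := (natDegree_signedEsymm_le (X : Fin k → MvPolynomial (Fin k) ℚ)).trans_lt
    ((Fintype.card_fin k).trans_lt hB)
  have hcoeff := coeff_coe_mul_eq_sum_range hdeg
    ((PowerSeries.exp (MvPolynomial (Fin k) ℚ)).subst (powerSumSeries X)) N
  rw [signedEsymm_mul_exp_subst_powerSumSeries, PowerSeries.coeff_one] at hcoeff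
  simp only [Nat.cast_eq_zero, hcoeff]
  refine Finset.sum_congr rfl fun c _ => congrArg _ ?_
  split_ifs with hc
  · rw [← Nat.cast_sub hc, pz_natCast, toPowerSumsHom_pS]
  · rw [pz_of_neg (by omega), map_zero]

section JacobiTrudi

variable {R S : Type*} [CommRing R] [CommRing S]

/-- The Jacobi-Trudi determinant `det(p_{λ_a - a + b})` of a partition `λ` with `g` parts (`p`
playing the role of the complete homogeneous symmetric functions), written in terms of the numbers
`β_a = λ_a + g - 1 - a`. These are arbitrary integers here: they need not be decreasing. -/
def jacobiTrudi (p : ℤ → R) {g : ℕ} (β : Fin g → ℤ) : R :=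
  (Matrix.of fun a b => p (β a - (b.rev : ℕ))).det

theorem map_jacobiTrudi {F : Type*} [FunLike F R S] [RingHomClass F R S] (φ : F) (p : ℤ → R)
    {g : ℕ} (β : Fin g → ℤ) : φ (jacobiTrudi p β) = jacobiTrudi (fun n => φ (p n)) β :=
  RingHom.map_det (φ : R →+* S) _

theorem derivation_jacobiTrudi {A : Type*} [CommRing A] [Algebra A R] (D : Derivation A R R)
    {p : ℤ → R} {i : ℤ} (hp : ∀ n, D (p n) = p (n - i)) {g : ℕ} (β : Fin g → ℤ) :
    D (jacobiTrudi p β) = ∑ a, jacobiTrudi p (β - Pi.single a i) := by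
  simp only [jacobiTrudi, Matrix.det_apply', map_sum]
  rw [Finset.sum_comm]
  refine Finset.sum_congr rfl fun σ _ => ?_
  rw [← Finset.mul_sum, ← zsmul_eq_mul, map_zsmul, derivation_prod, zsmul_eq_mul]
  refine congrArg _ (Eq.trans ?_ (Equiv.sum_comp σ _))
  refine Finset.sum_congr rfl fun b hb => ?_
  have hrest : ∀ j ∈ Finset.univ.erase b,
      p ((β - Pi.single (σ b) i : Fin g → ℤ) (σ j) - (j.rev : ℕ)) = p (β (σ j) - (j.rev : ℕ)) := by
    intro j hj
    simp [Pi.single_eq_of_ne (σ.injective.ne (Finset.ne_of_mem_erase hj))]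
  simp only [Matrix.of_apply]
  rw [← Finset.prod_erase_mul _ _ hb, Finset.prod_congr rfl hrest, hp, smul_eq_mul, Pi.sub_apply,
    Pi.single_eq_same, sub_right_comm]

-- The columns of the Jacobi-Trudi matrix, weighted by `e`, add up to the indicator function of the
-- rows `a` with `β a = r`.
theorem jacobiTrudi_eq_zero {p : ℤ → R} {e : ℕ → R} {g r : ℕ} (hr : r < g) (he : e 0 = 1)
    (hpe : ∀ N : ℤ, ∑ c ∈ Finset.range (g - r), e c * p (N - c) = if N = 0 then 1 else 0)
    {β : Fin g → ℤ} (hβ : ∀ a, β a ≠ r) : jacobiTrudi p β = 0 := by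
  let v (b : Fin g) : R := if r ≤ (b.rev : ℕ) then e (b.rev - r) else 0
  have hv : v (Fin.rev ⟨r, hr⟩) = 1 := by
    simp only [v, Fin.rev_rev, le_refl, if_true, tsub_self, he]
  refine Matrix.det_eq_zero_of_mulVec_eq_zero_of_mem_nonZeroDivisors (v := v) (funext fun a => ?_)
    (hv.symm ▸ one_mem (nonZeroDivisors R))
  calc ∑ b : Fin g, p (β a - (b.rev : ℕ)) * v b
      = ∑ b ∈ Finset.range g, p (β a - b) * if r ≤ b then e (b - r) else 0 := by
        rw [← Fin.sum_univ_eq_sum_range fun b : ℕ => p (β a - b) * if r ≤ b then e (b - r) else 0,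
          ← Equiv.sum_comp Fin.revPerm]
        simp only [v, Fin.revPerm_apply, Fin.rev_rev]
    _ = ∑ c ∈ Finset.range (g - r), e c * p (β a - r - c) := by
        obtain ⟨n, rfl⟩ := Nat.exists_eq_add_of_le hr.le
        rw [Finset.sum_range_add, Finset.sum_eq_zero, zero_add, Nat.add_sub_cancel_left]
        · refine Finset.sum_congr rfl fun c _ => ?_
          rw [if_pos (Nat.le_add_right r c), Nat.add_sub_cancel_left, mul_comm, Nat.cast_add,
            sub_sub]
        · intro b hb
          rw [if_neg (Finset.mem_range.mp hb).not_ge, mul_zero]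
    _ = 0 := by rw [hpe, if_neg (sub_ne_zero.mpr (hβ a))]

theorem jacobiTrudi_rev_eq_one {p : ℤ → R} (hp0 : p 0 = 1) (hp : ∀ n < 0, p n = 0) (n : ℕ) :
    jacobiTrudi p (fun a : Fin n => ((a.rev : ℕ) : ℤ)) = 1 := by
  rw [jacobiTrudi, Matrix.det_of_isUpperTriangular]
  · simp [hp0]
  · intro a b hab
    have : b < a := hab
    exact hp _ (by simp only [Fin.val_rev]; omega)

theorem jacobiTrudi_comp_perm (p : ℤ → R) {g : ℕ} (β : Fin g → ℤ) (π : Equiv.Perm (Fin g)) :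
    jacobiTrudi p (β ∘ π) = (Equiv.Perm.sign π : ℤ) * jacobiTrudi p β :=
  Matrix.det_permute π (Matrix.of fun a b => p (β a - (b.rev : ℕ)))

theorem jacobiTrudi_append {p : ℤ → R} (hp : ∀ n < 0, p n = 0) {k n : ℕ} (α : Fin k → ℤ)
    (γ : Fin n → ℤ) (hγ : ∀ j, γ j < n) :
    jacobiTrudi p (Fin.append (fun a => α a + n) γ) = jacobiTrudi p α * jacobiTrudi p γ := by
  rw [jacobiTrudi, ← Matrix.det_submatrix_equiv_self finSumFinEquiv, jacobiTrudi, jacobiTrudi,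
    ← Matrix.det_fromBlocks_zero₂₁ _
      (Matrix.of fun (a : Fin k) (b : Fin n) => p (α a + n - (b.rev : ℕ)))]
  have hleft (b : Fin k) : ((Fin.castAdd n b).rev : ℤ) = (b.rev : ℕ) + n := by
    rw [Fin.rev_castAdd, Fin.val_addNat, Nat.cast_add]
  have hright (b : Fin n) : ((Fin.natAdd k b).rev : ℤ) = (b.rev : ℕ) := by
    rw [Nat.cast_inj, Fin.val_rev, Fin.val_rev, Fin.val_natAdd, add_assoc, Nat.add_sub_add_left]
  congr 1
  ext (a | a) (b | b)
  · simp [-Fin.val_rev, hleft]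
  · simp [-Fin.val_rev, hright]
  · simpa [-Fin.val_rev, hleft] using hp _ (by have := hγ a; omega)
  · simp [-Fin.val_rev, hright]

theorem jacobiTrudi_comp_cast (p : ℤ → R) {m n : ℕ} (h : m = n) (β : Fin n → ℤ) :
    jacobiTrudi p (β ∘ Fin.cast h) = jacobiTrudi p β := by
  subst h
  rfl

end JacobiTrudi

theorem schur_eq_jacobiTrudi {g : ℕ} (lam : Fin g → ℕ) :
    schur lam = jacobiTrudi pz fun a => (lam a : ℤ) + (a.rev : ℕ) := by
  rw [schur, jacobiTrudi]
  congr 2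
  ext1 a
  ext1 b
  congr 1
  simp only [Fin.val_rev]
  omega

theorem toPowerSumsHom_jacobiTrudi_pz_eq_zero {g k r : ℕ} (hr : k + r < g) {β : Fin g → ℤ}
    (hβ : ∀ a, β a ≠ r) : toPowerSumsHom k (jacobiTrudi pz β) = 0 := by
  rw [map_jacobiTrudi]
  exact jacobiTrudi_eq_zero (by omega)
    (coeff_zero_signedEsymm (X : Fin k → MvPolynomial (Fin k) ℚ))
    (fun N => by rw [← sum_signedEsymm_mul_toPowerSumsHom_pz (Nat.lt_sub_of_add_lt hr) N]) hβ

section Lower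

variable {α ι M : Type*} [DecidableEq α] [Fintype ι] [AddCommGroup M] {β : α → M} {f : ι → α}
  {d : ι → M}

/-- The family `β` after `β (f j)` has been lowered by `d j` for every `j`. Lowerings at the same
place accumulate. -/
def lower (β : α → M) (f : ι → α) (d : ι → M) : α → M :=
  β - ∑ j, Pi.single (f j) (d j)

theorem lower_apply_of_notMem_range {a : α} (ha : a ∉ Set.range f) : lower β f d a = β a := by
  rw [lower, Pi.sub_apply, Finset.sum_apply, Finset.sum_eq_zero, sub_zero]
  exact fun j _ => Pi.single_eq_of_ne (fun h => ha ⟨j, h.symm⟩) _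

theorem lower_apply_of_injective (hf : Function.Injective f) (j : ι) :
    lower β f d (f j) = β (f j) - d j := by
  rw [lower, Pi.sub_apply, Finset.sum_apply, Finset.sum_eq_single_of_mem j (Finset.mem_univ j),
    Pi.single_eq_same]
  exact fun i _ hij => Pi.single_eq_of_ne (hf.ne hij.symm) _

end Lower

theorem derivs_ofFn_jacobiTrudi_pz {g m : ℕ} (d : Fin m → ℕ) (hd : ∀ j, d j ≠ 0)
    (β : Fin g → ℤ) :
    derivs (List.ofFn d) (jacobiTrudi pz β) =
      ∑ f : Fin m → Fin g, jacobiTrudi pz (lower β f fun j => d j) := by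
  induction m with
  | zero => simp [derivs, lower]
  | succ m ih =>
    calc derivs (List.ofFn d) (jacobiTrudi pz β)
        = pderiv (d 0) (∑ f : Fin m → Fin g, jacobiTrudi pz (lower β f fun j => d j.succ)) := by
          rw [← ih _ fun j => hd j.succ, List.ofFn_succ]
          rfl
      _ = ∑ f : Fin m → Fin g, ∑ a,
            jacobiTrudi pz (lower β (Fin.cons a f : Fin (m + 1) → Fin g) fun j => d j) := by
          simp only [map_sum, derivation_jacobiTrudi _ (pderiv_pz (hd 0)), lower,
            Fin.sum_univ_succ, Fin.cons_zero, Fin.cons_succ, sub_sub, add_comm]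
      _ = ∑ f : Fin (m + 1) → Fin g, jacobiTrudi pz (lower β f fun j => d j) := by
          rw [← (Fin.consEquiv fun _ => Fin g).sum_comp, Fintype.sum_prod_type_right]
          rfl

theorem derivs_map_range_jacobiTrudi_pz {g m : ℕ} (d : ℕ → ℕ) (hd : ∀ j < m, d j ≠ 0)
    (β : Fin g → ℤ) :
    derivs ((List.range m).map d) (jacobiTrudi pz β) =
      ∑ f : Fin m → Fin g, jacobiTrudi pz (lower β f fun j => d j) := by
  rw [← derivs_ofFn_jacobiTrudi_pz _ fun j => hd j j.isLt, List.ofFn_eq_map,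
    ← List.map_coe_finRange_eq_range, List.map_map]
  rfl

section Exchange

theorem exists_perm_eq_comp {ι γ : Type*} [Finite ι] {s F : ι → γ} (hs : Function.Injective s)
    (hsF : Set.range s ⊆ Set.range F) : ∃ τ : Equiv.Perm ι, F = s ∘ τ := by
  choose σ hσ using fun i => hsF ⟨i, rfl⟩
  have hσinj : Function.Injective σ := fun i j hij => hs (by rw [← hσ, hij, hσ])
  refine ⟨(Equiv.ofBijective σ (Finite.injective_iff_bijective.mp hσinj)).symm, ?_⟩
  exact (Equiv.eq_comp_symm _ _ _).mpr (funext hσ)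

variable {ι α M : Type*} [LinearOrder ι] [LinearOrder α] [AddCommGroup M] [LinearOrder M]
  [IsOrderedAddMonoid M] {v : α → M} {s : ι → M} {r f : ι → α}

theorem eq_of_add_eq_add_comp_of_strictMono [WellFoundedGT ι] (hv : StrictAnti v)
    (hs : StrictMono s) (hr : StrictMono r)
    (hr_up : ∀ i a, r i < a → a ∈ Set.range f → a ∈ Set.range r)
    (hf : Function.Injective f) {τ : ι → ι} (hτ : Function.Injective τ)
    (h : ∀ i, v (f i) + s i = v (r i) + s (τ i)) : f = r := by
  -- If `f = r` and `τ = id` beyond `i`, then `τ i ≤ i`, hence `v (f i) ≤ v (r i)` and `r i ≤ f i`;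
  -- a strict inequality would give `f i = r j = f j` for some `j > i`.
  suffices ∀ i, f i = r i ∧ τ i = i from funext fun i => (this i).1
  intro i
  induction i using WellFoundedGT.induction with
  | ind i ih =>
    have hτi : τ i ≤ i := by
      by_contra! hlt
      exact hlt.ne' (hτ (ih _ hlt).2)
    have hvi : v (f i) ≤ v (r i) := by
      refine le_of_add_le_add_right ((h i).trans_le ?_)
      exact add_le_add_right (hs.monotone hτi) _
    have hfi : f i = r i := by
      refine ((hv.le_iff_ge.mp hvi).eq_or_lt.resolve_right fun hlt => ?_).symm
      obtain ⟨j, hj⟩ := hr_up i _ hlt ⟨i, rfl⟩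
      have hij : i < j := hr.lt_iff_lt.mp (hlt.trans_eq hj.symm)
      exact hij.ne' (hf ((ih j hij).1.trans hj))
    refine ⟨hfi, hs.injective ?_⟩
    have hi := h i
    rw [hfi] at hi
    exact (add_left_cancel hi).symm

theorem eq_of_subset_range_lower [Fintype ι] (hv : StrictAnti v) (hs : StrictMono s)
    (hr : StrictMono r) {T : Set M} (hsv : ∀ j, s j ∉ Set.range v) (hsT : ∀ j, s j ∈ T)
    (hr_up : ∀ i a, r i < a → v a ∉ T → a ∈ Set.range r)
    (hT : T ⊆ Set.range (lower v f fun j => v (r j) - s j)) : f = r := by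
  have hattained (j : ι) : s j ∈ Set.range fun i => lower v f (fun j => v (r j) - s j) (f i) := by
    obtain ⟨a, ha⟩ := hT (hsT j)
    by_cases haf : a ∈ Set.range f
    · obtain ⟨i, rfl⟩ := haf
      exact ⟨i, ha⟩
    · exact absurd ⟨a, (lower_apply_of_notMem_range haf).symm.trans ha⟩ (hsv j)
  obtain ⟨τ, hτ⟩ := exists_perm_eq_comp hs.injective (Set.range_subset_iff.mpr hattained)
  have hlower (i : ι) : lower v f (fun j => v (r j) - s j) (f i) = s (τ i) := congrFun hτ i
  have hf : Function.Injective f := fun i j hij =>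
    τ.injective (hs.injective (by rw [← hlower, ← hlower, hij]))
  have hfT (i : ι) : v (f i) ∉ T := by
    intro hi
    obtain ⟨a, ha⟩ := hT hi
    by_cases haf : a ∈ Set.range f
    · obtain ⟨j, rfl⟩ := haf
      exact hsv (τ j) ⟨f i, by rw [← ha, hlower]⟩
    · rw [lower_apply_of_notMem_range haf] at ha
      exact haf ⟨i, (hv.injective ha).symm⟩
  refine eq_of_add_eq_add_comp_of_strictMono hv hs hr ?_ hf τ.injective fun i => ?_
  · rintro i a hia ⟨j, rfl⟩
    exact hr_up i _ hia (hfT j)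
  · rw [← hlower, lower_apply_of_injective hf]
    abel

end Exchange

section GapSequence

variable {G : Finset ℕ} {g k i j : ℕ}

theorem wseq_eq_nth : wseq G i = Nat.nth (· ∈ G) i := by
  rw [wseq, Nat.nth_eq_getD_sort (p := (· ∈ G)) G.finite_toSet]
  congr 2
  exact G.finite_toSet_toFinset.symm

theorem wseq_strictMonoOn : StrictMonoOn (wseq G) (Set.Iio G.card) := by
  intro i _ j hj hij
  rw [wseq_eq_nth, wseq_eq_nth]
  exact Nat.nth_lt_nth_of_lt_card G.finite_toSet hij (by simpa using hj)

theorem wseq_mem (hi : i < G.card) : wseq G i ∈ G := by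
  rw [wseq_eq_nth]
  exact Nat.nth_mem_of_lt_card (p := (· ∈ G)) G.finite_toSet (by simpa using hi)

theorem le_wseq (hi : i < G.card) : i ≤ wseq G i := by
  rw [wseq_eq_nth]
  exact Nat.le_nth fun _ => by simpa using hi

theorem wstar_strictMono : StrictMono (wstar G) :=
  Nat.nth_strictMono G.finite_toSet.infinite_compl

theorem wstar_notMem : wstar G j ∉ G :=
  Nat.nth_mem_of_infinite (p := (· ∉ G)) G.finite_toSet.infinite_compl j

theorem wstar_lt (hj : j < gapm G g k) : wstar G j < g - k :=
  Nat.nth_lt_of_lt_count (hj.trans_eq (Nat.count_eq_card_filter_range _ _).symm)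

theorem gapm_le : gapm G g k ≤ g - k :=
  (Finset.card_filter_le _ _).trans_eq (Finset.card_range _)

theorem count_mem_add_gapm : Nat.count (· ∈ G) (g - k) + gapm G g k = g - k := by
  rw [gapm, Nat.count_eq_card_filter_range, Finset.card_filter_add_card_filter_not,
    Finset.card_range]

theorem wseq_lt_iff (hi : i < G.card) : wseq G i < g - k ↔ i + gapm G g k < g - k := by
  have hcount : i < Nat.count (· ∈ G) (g - k) ↔ i + gapm G g k < g - k := by
    have := count_mem_add_gapm (G := G) (g := g) (k := k)
    omega
  rw [← hcount, wseq_eq_nth]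
  refine ⟨fun h => ?_, Nat.nth_lt_of_lt_count⟩
  have hi' : i < Finset.card (Set.Finite.toFinset (s := Set.ofPred (· ∈ G)) G.finite_toSet) := by
    simpa using hi
  rw [← Nat.count_nth_of_lt_card_finite G.finite_toSet hi']
  exact Nat.count_strict_mono (Nat.nth_mem_of_lt_card G.finite_toSet hi') h

variable (G g) in
/-- The numbers `β_a = λ_a + g - 1 - a` of the partition `λ` attached to `G`, which are the elements
of `G` in decreasing order. -/
def gapBeta (a : Fin g) : ℤ :=
  wseq G a.rev

theorem gapBeta_strictAnti (hG : g ≤ G.card) : StrictAnti (gapBeta G g) := by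
  intro a b hab
  refine Nat.cast_lt.mpr (wseq_strictMonoOn ?_ ?_ (Fin.rev_lt_rev.mpr hab))
  · exact b.rev.isLt.trans_le hG
  · exact a.rev.isLt.trans_le hG

theorem wstar_notMem_range_gapBeta (hG : g ≤ G.card) :
    (wstar G j : ℤ) ∉ Set.range (gapBeta G g) := by
  rintro ⟨a, ha⟩
  exact wstar_notMem (Nat.cast_injective ha ▸ wseq_mem (a.rev.isLt.trans_le hG))

theorem schur_gapPart_eq_jacobiTrudi (hG : g ≤ G.card) :
    schur (fun a : Fin g => gapPart G g a) = jacobiTrudi pz (gapBeta G g) := by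
  rw [schur_eq_jacobiTrudi]
  congr 1
  ext a
  have := le_wseq (a.rev.isLt.trans_le hG)
  simp only [gapPart, gapBeta, Fin.val_rev, Nat.sub_sub, add_comm] at this ⊢
  omega

/-- The row of the Jacobi-Trudi matrix that carries `w_{g-k-j}`, the element of `G` from which
`a^{(k)}_{j+1}` is measured. -/
def gapRow (G : Finset ℕ) (hk : k ≤ g) (j : Fin (gapm G g k)) : Fin g :=
  ⟨k + j, by have := gapm_le (G := G) (g := g) (k := k); omega⟩

theorem gapBeta_gapRow (hk : k ≤ g) (j : Fin (gapm G g k)) :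
    gapBeta G g (gapRow G hk j) = wseq G (g - k - j - 1) := by
  simp only [gapBeta, gapRow, Fin.val_rev, Nat.sub_sub, add_assoc]

theorem wstar_lt_wseq (hG : g ≤ G.card) (hj : j < gapm G g k) :
    wstar G j < wseq G (g - k - j - 1) := by
  have hle := gapm_le (G := G) (g := g) (k := k)
  refine (wstar_lt hj).trans_le (not_lt.mp ?_)
  rw [wseq_lt_iff (by omega)]
  omega

theorem gapa_ne_zero (hG : g ≤ G.card) (hj : j < gapm G g k) : gapa G g k j ≠ 0 :=
  Nat.sub_ne_zero_of_lt (wstar_lt_wseq hG hj)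

theorem cast_gapa (hG : g ≤ G.card) (hk : k ≤ g) (j : Fin (gapm G g k)) :
    (gapa G g k j : ℤ) = gapBeta G g (gapRow G hk j) - wstar G j := by
  rw [gapBeta_gapRow, gapa, Nat.cast_sub (wstar_lt_wseq hG j.isLt).le]

theorem gapRow_strictMono (hk : k ≤ g) : StrictMono (gapRow G hk) :=
  fun _ _ hij => Nat.add_lt_add_left (Fin.lt_def.mp hij) k

theorem mem_range_gapRow {hk : k ≤ g} {a : Fin g} :
    a ∈ Set.range (gapRow G hk) ↔ k ≤ a ∧ a < k + gapm G g k := by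
  constructor
  · rintro ⟨j, rfl⟩
    exact ⟨Nat.le_add_right k j, Nat.add_lt_add_left j.isLt k⟩
  · rintro ⟨hka, ham⟩
    exact ⟨⟨a - k, by omega⟩, Fin.ext (Nat.add_sub_of_le hka)⟩

theorem eq_gapRow (hG : g ≤ G.card) (hk : k ≤ g) {f : Fin (gapm G g k) → Fin g}
    (hf : ∀ t < g - k, ∃ a, lower (gapBeta G g) f (fun j => (gapa G g k j : ℤ)) a = t) :
    f = gapRow G hk := by
  refine eq_of_subset_range_lower (gapBeta_strictAnti hG)
    (s := fun j : Fin (gapm G g k) => (wstar G j : ℤ)) (r := gapRow G hk)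
    (fun i j hij => Nat.cast_lt.mpr (wstar_strictMono hij)) (gapRow_strictMono hk)
    (T := (Nat.cast '' Set.Iio (g - k) : Set ℤ)) (fun j => wstar_notMem_range_gapBeta hG)
    (fun j => ⟨_, wstar_lt j.isLt, rfl⟩) ?_ ?_
  · intro i a hia ha
    have hka : k + (i : ℕ) < a := hia
    have hlt : ¬wseq G a.rev < g - k := fun h => ha ⟨_, h, rfl⟩
    rw [wseq_lt_iff (a.rev.isLt.trans_le hG), Fin.val_rev] at hlt
    exact mem_range_gapRow.mpr (by omega)
  · rintro _ ⟨t, ht, rfl⟩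
    simpa only [cast_gapa hG hk, Set.mem_range] using hf t ht

variable (G g k j) in
/-- The tuple `(w_1^*, ..., w_{m_k}^*, w_{g-k-m_k}, ..., w_1)`, indexed from `0`. -/
noncomputable def gapTuple : ℕ :=
  if j < gapm G g k then wstar G j else wseq G (g - k - j - 1)

theorem gapTuple_lt (hG : g ≤ G.card) (hj : j < g - k) : gapTuple G g k j < g - k := by
  rw [gapTuple]
  split_ifs with hjm
  · exact wstar_lt hjm
  · rw [wseq_lt_iff (by omega)]
    omega

theorem lower_gapRow_of_lt (hG : g ≤ G.card) (hk : k ≤ g) {a : Fin g} (ha : a < k) :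
    lower (gapBeta G g) (gapRow G hk) (fun j => (gapa G g k j : ℤ)) a =
      gapPart G g a + (k - 1 - a : ℕ) + (g - k : ℕ) := by
  rw [lower_apply_of_notMem_range fun h => ha.not_ge (mem_range_gapRow.mp h).1, gapBeta, gapPart]
  have hle := le_wseq (a.rev.isLt.trans_le hG)
  rw [Fin.val_rev, Nat.add_comm, ← Nat.sub_sub] at hle ⊢
  omega

theorem lower_gapRow_of_le (hG : g ≤ G.card) (hk : k ≤ g) {a : Fin g} (ha : k ≤ a) :
    lower (gapBeta G g) (gapRow G hk) (fun j => (gapa G g k j : ℤ)) a =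
      gapTuple G g k (a - k) := by
  rw [gapTuple]
  split_ifs with ham
  · obtain ⟨j, rfl⟩ := mem_range_gapRow (hk := hk).mpr ⟨ha, (Nat.sub_lt_iff_lt_add' ha).mp ham⟩
    rw [lower_apply_of_injective (gapRow_strictMono hk).injective, cast_gapa hG hk, sub_sub_cancel]
    simp only [gapRow, Nat.add_sub_cancel_left]
  · rw [lower_apply_of_notMem_range fun h => ham ?_, gapBeta, Fin.val_rev]
    · congr 2
      omega
    · have := (mem_range_gapRow.mp h).2
      omega

theorem jacobiTrudi_pz_lower_gapRow (hG : g ≤ G.card) (hk : k ≤ g)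
    {π : Equiv.Perm (Fin (g - k))}
    (hπ : ∀ j : Fin (g - k), (π j : ℕ) = g - k - 1 - gapTuple G g k j) :
    jacobiTrudi pz (lower (gapBeta G g) (gapRow G hk) fun j => (gapa G g k j : ℤ)) =
      (Equiv.Perm.sign π : ℤ) * schur (fun a : Fin k => gapPart G g a) := by
  have hrows : lower (gapBeta G g) (gapRow G hk) (fun j => (gapa G g k j : ℤ)) ∘
        Fin.cast (Nat.add_sub_of_le hk) =
      Fin.append (fun a : Fin k => ((gapPart G g a : ℤ) + (a.rev : ℕ)) + (g - k : ℕ))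
        ((fun j : Fin (g - k) => ((j.rev : ℕ) : ℤ)) ∘ π) := by
    refine (Fin.append_castAdd_natAdd).symm.trans ?_
    congr 1 <;> ext j
    · simp only [Function.comp_apply]
      rw [lower_gapRow_of_lt hG hk (by simp)]
      simp [Nat.sub_sub, add_comm]
    · simp only [Function.comp_apply]
      rw [lower_gapRow_of_le hG hk (by simp)]
      have := gapTuple_lt hG j.isLt
      have := hπ j
      simp only [Fin.val_cast, Fin.val_natAdd, Nat.add_sub_cancel_left, Fin.val_rev]
      omega
  have hlt (j : Fin (g - k)) :
      ((fun j : Fin (g - k) => ((j.rev : ℕ) : ℤ)) ∘ π) j < (g - k : ℕ) :=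
    Nat.cast_lt.mpr (π j).rev.isLt
  rw [← jacobiTrudi_comp_cast pz (Nat.add_sub_of_le hk), hrows,
    jacobiTrudi_append (fun _ => pz_of_neg) _ _ hlt, jacobiTrudi_comp_perm,
    jacobiTrudi_rev_eq_one pz_zero fun _ => pz_of_neg, mul_one, schur_eq_jacobiTrudi, mul_comm]

end GapSequence

theorem statement8_general (g : ℕ) (G : Finset ℕ) (hG : g ≤ G.card) (k : ℕ) (hk : k ≤ g)
    (π : Equiv.Perm (Fin (g - k)))
    (hπ : ∀ j : Fin (g - k), ((π j : ℕ))
        = g - k - 1 - (if (j : ℕ) < gapm G g k then wstar G j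
            else wseq G (g - k - (j : ℕ) - 1))) :
    toPowerSums k (derivs ((List.range (gapm G g k)).map (gapa G g k))
        (schur (fun a : Fin g => gapPart G g a)))
      = ((Equiv.Perm.sign π : ℤ) : ℚ)
          • toPowerSums k (schur (fun a : Fin k => gapPart G g a)) := by
  change toPowerSumsHom k _ = _ • toPowerSumsHom k _
  rw [schur_gapPart_eq_jacobiTrudi hG,
    derivs_map_range_jacobiTrudi_pz _ fun j hj => gapa_ne_zero hG hj, map_sum,
    Finset.sum_eq_single (gapRow G hk), jacobiTrudi_pz_lower_gapRow hG hk hπ, ← zsmul_eq_mul,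
    map_zsmul, Int.cast_smul_eq_zsmul]
  · intro f _ hf
    obtain ⟨t, ht, hnot⟩ : ∃ t < g - k,
        ∀ a, lower (gapBeta G g) f (fun j => (gapa G g k j : ℤ)) a ≠ t := by
      contrapose! hf
      exact eq_gapRow hG hk hf
    exact toPowerSumsHom_jacobiTrudi_pz_eq_zero (by omega) hnot
  · exact fun h => absurd (Finset.mem_univ _) h

/-- Let `λ` be the partition associated to a gap sequence `G` of genus `g`
and `0 ≤ k ≤ g`. Then `∂_{a^{(k)}_1} ⋯ ∂_{a^{(k)}_{m_k}} s_λ`, evaluated at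
`t = [x_1]+⋯+[x_k]`, equals `c_k · s_{(λ_1,...,λ_k)}([x_1]+⋯+[x_k])`, where `c_k` is the
sign of the permutation `π` of `{0, ..., g-k-1}` determined by the tuple
`v = (w_1^*, ..., w_{m_k}^*, w_{g-k-m_k}, ..., w_1)` via `π j = g-k-1 - v_j`
(so that `c_k = sgn( v over (g-k-1, ..., 1, 0) )`), and `c_g = 1` (empty permutation) with
the empty derivative for `k = g`. -/
theorem statement8 (g : ℕ) (hg : 1 ≤ g) (G : Finset ℕ)
    (hcard : G.card = g) (h0 : 0 ∉ G)
    (hadd : ∀ a b : ℕ, a ∉ G → b ∉ G → a + b ∉ G)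
    (k : ℕ) (hk : k ≤ g)
    (π : Equiv.Perm (Fin (g - k)))
    (hπ : ∀ j : Fin (g - k), ((π j : ℕ))
        = g - k - 1 - (if (j : ℕ) < gapm G g k then wstar G j
            else wseq G (g - k - (j : ℕ) - 1))) :
    toPowerSums k (derivs ((List.range (gapm G g k)).map (gapa G g k))
        (schur (fun a : Fin g => gapPart G g a)))
      = ((Equiv.Perm.sign π : ℤ) : ℚ)
          • toPowerSums k (schur (fun a : Fin k => gapPart G g a)) := by
  exact statement8_general g G hcard.ge k hk π hπ
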